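/- arXiv:1801.00247 — 6 statements merged into one kernel-verified Lean document; each statement's English description precedes it below -/
import Mathlib

section
/- Let p be a prime, n ≥ 1, and r = n·p. In the free ℤ-module M = (Fin r → ℤ) with standard basis vectors e_i, let K be the submodule {c : ∑ i, c i = 0} (degree-zero divisors supported on the branch points) and let N ⊆ K be the submodule generated by the elements p • (e i − e j) for all i, j and (∑ k, e k) − r • e i for all i (the relations p·a_i − p·a_j = 0 and a_1 + ⋯ + a_r = r·a_i holding on a p-gonal surface). Then the quotient K ⧸ N is isomorphic as an additive group to (Fin (r−2) → ZMod p); in particular it has cardinality p^{r−2}. (This is the statement J_p* ≅ (ℤ/p)^{r−2} for a p-gonal surface with r = np branch points, and hence that there are exactly p^{r−2} p-spin structures, and m-spin structures for any multiple m of p dividing 2g−2, supported on the branch set.) -/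
/-- `J_p* ≅ (ℤ/p)^{r-2}` for a `p`-gonal surface with `r = n·p` branch points:
the degree-zero divisors supported on the branch points, modulo the relations
`p·a_i = p·a_j` and `a_1 + ⋯ + a_r = r·a_i`, form a group isomorphic to
`(ZMod p)^{r-2}`; in particular it has cardinality `p^{r-2}`. -/
theorem p_torsion_branch_presentation (p n : ℕ) (hp : p.Prime) (hn : 1 ≤ n)
    (r : ℕ) (hr : r = n * p)
    (e : Fin r → (Fin r → ℤ)) (he : ∀ i, e i = Pi.single i 1)
    (K : Submodule ℤ (Fin r → ℤ)) (hK : ∀ c : Fin r → ℤ, c ∈ K ↔ ∑ i, c i = 0)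
    (N : Submodule ℤ (Fin r → ℤ))
    (hN : N = Submodule.span ℤ
        ((Set.range fun ij : Fin r × Fin r => (p : ℤ) • (e ij.1 - e ij.2)) ∪
          (Set.range fun i : Fin r => (∑ k, e k) - (r : ℤ) • e i))) :
    Nonempty ((↥K ⧸ Submodule.comap K.subtype N) ≃+ (Fin (r - 2) → ZMod p)) ∧
      Nat.card (↥K ⧸ Submodule.comap K.subtype N) = p ^ (r - 2) := by
  have h2 : 2 ≤ r := by
    rw [hr]; exact le_trans hp.two_le (Nat.le_mul_of_pos_left p hn)
  have hpr : p ∣ r := ⟨n, by rw [hr, mul_comm]⟩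
  clear hr
  obtain ⟨m, rfl⟩ : ∃ m, r = m + 2 := ⟨r - 2, by omega⟩
  obtain rfl : e = fun i => Pi.single i 1 := funext he
  clear he
  simp only [Nat.add_sub_cancel]
  have : NeZero p := ⟨hp.ne_zero⟩
  have hr0 : (((m + 2 : ℕ) : ℤ) : ZMod p) = 0 := by
    rw [Int.cast_natCast]; exact (ZMod.natCast_eq_zero_iff _ _).2 hpr
  let g : (Fin (m + 2) → ℤ) →ₗ[ℤ] (Fin m → ZMod p) :=
    AddMonoidHom.toIntLinearMap
      { toFun := fun c i => ((c i.succ.succ - c 1 : ℤ) : ZMod p)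
        map_zero' := by ext i; simp
        map_add' := by intro a b; ext i; simp; ring }
  have hg : ∀ c i, g c i = ((c i.succ.succ - c 1 : ℤ) : ZMod p) := fun c i => rfl
  have hsurj : Function.Surjective (g.comp K.subtype) := by
    intro w
    let t : Fin (m + 1) → ℤ := Fin.cons 0 (fun i => ((w i).val : ℤ))
    refine ⟨⟨Fin.cons (-∑ i, t i) t, ?_⟩, ?_⟩
    · rw [hK, Fin.sum_univ_succ]; simp
    · ext i
      have h1 : (1 : Fin (m + 2)) = Fin.succ 0 := rfl
      simp only [LinearMap.comp_apply, Submodule.subtype_apply, hg, h1, Fin.cons_succ, t,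
        Fin.cons_zero]
      simp
  have hker : LinearMap.ker (g.comp K.subtype) = Submodule.comap K.subtype N := by
    rw [LinearMap.ker_comp]
    ext ⟨c, hc⟩
    rw [hK] at hc
    simp only [Submodule.mem_comap, Submodule.subtype_apply, LinearMap.mem_ker]
    constructor
    · intro h
      have hd : ∀ k : Fin (m + 2), k ≠ 0 → (p : ℤ) ∣ c k - c 1 := by
        intro k hk
        obtain ⟨j, rfl⟩ := Fin.exists_succ_eq.2 hk
        rcases Fin.eq_zero_or_eq_succ j with rfl | ⟨i, rfl⟩
        · simp
        · have := congrFun h i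
          rw [hg] at this
          exact (ZMod.intCast_zmod_eq_zero_iff_dvd _ _).1 this
      have hc' : c = c 1 • ((∑ k, (Pi.single k 1 : Fin (m + 2) → ℤ)) -
            ((m + 2 : ℕ) : ℤ) • (Pi.single 0 1 : Fin (m + 2) → ℤ)) +
          ∑ k, (c k - c 1) • ((Pi.single k 1 : Fin (m + 2) → ℤ) - Pi.single 0 1) := by
        ext l
        simp only [Pi.add_apply, Pi.smul_apply, Pi.sub_apply, Finset.sum_apply, smul_eq_mul,
          mul_sub, Finset.sum_sub_distrib, Pi.single_apply, ← Finset.sum_mul, hc]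
        simp
        split_ifs <;> ring
      rw [hc', hN]
      refine Submodule.add_mem _ (Submodule.smul_mem _ _ (Submodule.subset_span
        (Or.inr ⟨0, rfl⟩))) (Submodule.sum_mem _ fun k _ => ?_)
      by_cases hk : k = 0
      · subst hk; simp
      · obtain ⟨d, hd⟩ := hd k hk
        rw [hd, mul_comm, mul_smul]
        exact Submodule.smul_mem _ _ (Submodule.subset_span (Or.inl ⟨(k, 0), rfl⟩))
    · intro h
      have hle : N ≤ LinearMap.ker g := by
        rw [hN, Submodule.span_le]
        rintro _ (⟨⟨i, j⟩, rfl⟩ | ⟨i, rfl⟩)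
        · simp only [SetLike.mem_coe, LinearMap.mem_ker]
          ext l
          simp [hg]
        · simp only [SetLike.mem_coe, LinearMap.mem_ker]
          ext l
          rw [hg]
          simp only [Pi.sub_apply, Pi.smul_apply, Finset.sum_apply, smul_eq_mul, Int.cast_sub,
            Int.cast_mul, hr0, Pi.zero_apply]
          simp [Pi.single_apply]
      exact hle h
  have E : (↥K ⧸ Submodule.comap K.subtype N) ≃+ (Fin m → ZMod p) :=
    ((Submodule.quotEquivOfEq _ _ hker.symm).trans
      (LinearMap.quotKerEquivOfSurjective _ hsurj)).toAddEquiv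
  refine ⟨⟨E⟩, ?_⟩
  rw [Nat.card_congr E.toEquiv]
  simp [Nat.card_eq_fintype_card, ZMod.card]
end

section
/- Let g ≥ 1 and 1 ≤ k ≤ g+1, and let σ be a permutation of Fin (2g+2) with σ ∘ σ = id having exactly 2k fixed points. Then the subgroup of σ*-fixed elements {y ∈ J : σ* y = y} has cardinality 2^{g+k−1}. (This is the statement that for a hyperelliptic surface of genus g defined by a real polynomial with exactly 2k real branch points and not all branch points real, the anti-holomorphic involution τ induced by complex conjugation fixes exactly 2^{g+k−1} two-spin structures; equivalently, the Klein surface X/⟨τ⟩ has exactly 2^{g+k−1} two-spin structures.) -/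
/-- Twice the number of representatives of orbits. -/
theorem aux_card_reps {n : ℕ} (σ : Equiv.Perm (Fin n)) (hinv : ∀ i, σ (σ i) = i) :
    2 * Fintype.card {i : Fin n // i ≤ σ i} = n + Fintype.card {i : Fin n // σ i = i} := by
  classical
  rw [Fintype.card_subtype, Fintype.card_subtype]
  have h1 : (Finset.univ.filter fun i : Fin n => i ≤ σ i).card
      = (Finset.univ.filter fun i : Fin n => σ i ≤ i).card := by
    refine Finset.card_bij (fun i _ => σ i) ?_ ?_ ?_
    · intro i hi
      simpa [hinv] using hi
    · intro a _ b _ h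
      exact σ.injective h
    · intro b hb
      exact ⟨σ b, by simpa [hinv] using hb, hinv b⟩
  have h2 := Finset.card_union_add_card_inter
    (Finset.univ.filter fun i : Fin n => i ≤ σ i) (Finset.univ.filter fun i : Fin n => σ i ≤ i)
  have h3 : (Finset.univ.filter fun i : Fin n => i ≤ σ i) ∪
      (Finset.univ.filter fun i : Fin n => σ i ≤ i) = Finset.univ := by
    ext i
    simpa using le_total i (σ i)
  have h4 : (Finset.univ.filter fun i : Fin n => i ≤ σ i) ∩
      (Finset.univ.filter fun i : Fin n => σ i ≤ i) =
      Finset.univ.filter fun i : Fin n => σ i = i := by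
    ext i
    simp only [Finset.mem_inter, Finset.mem_filter, Finset.mem_univ, true_and]
    exact ⟨fun h => le_antisymm h.2 h.1, fun h => ⟨h.ge, h.le⟩⟩
  rw [h3, h4, Finset.card_univ, Fintype.card_fin] at h2
  omega

/-- Invariant functions. -/
def auxInv {n : ℕ} (σ : Equiv.Perm (Fin n)) : AddSubgroup (Fin n → ZMod 2) where
  carrier := {x | ∀ i, x (σ i) = x i}
  zero_mem' := by intro i; rfl
  add_mem' := by
    intro a b ha hb i
    simp only [Pi.add_apply]
    rw [ha i, hb i]
  neg_mem' := by
    intro a ha i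
    simp only [Pi.neg_apply]
    rw [ha i]

theorem aux_mem_inv {n : ℕ} (σ : Equiv.Perm (Fin n)) (x : Fin n → ZMod 2) :
    x ∈ auxInv σ ↔ ∀ i, x (σ i) = x i := Iff.rfl

/-- Invariant functions are functions on representatives. -/
def auxEquiv {n : ℕ} (σ : Equiv.Perm (Fin n)) (hinv : ∀ i, σ (σ i) = i) :
    auxInv σ ≃ ({i : Fin n // i ≤ σ i} → ZMod 2) where
  toFun x i := x.1 i.1
  invFun f := ⟨fun i => if h : i ≤ σ i then f ⟨i, h⟩
      else f ⟨σ i, by rw [hinv]; exact (not_le.mp h).le⟩, by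
    intro i
    by_cases h : i ≤ σ i
    · by_cases h' : σ i ≤ i
      · have e : σ i = i := le_antisymm h' h
        simp only [e]
      · simp [hinv, h, h']
    · have h' : σ i ≤ i := (not_le.mp h).le
      simp [hinv, h, h']⟩
  left_inv x := by
    ext i
    by_cases h : i ≤ σ i
    · simp [h]
    · simp only [h, dite_false]
      exact x.2 i
  right_inv f := by
    ext i
    simp [i.2]

theorem aux_card_inv {n : ℕ} (σ : Equiv.Perm (Fin n)) (hinv : ∀ i, σ (σ i) = i) :
    Nat.card (auxInv σ) = 2 ^ Fintype.card {i : Fin n // i ≤ σ i} := by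
  rw [Nat.card_congr (auxEquiv σ hinv), Nat.card_eq_fintype_card, Fintype.card_fun, ZMod.card]

/-- The sum map on invariant functions. -/
def auxSum {n : ℕ} (σ : Equiv.Perm (Fin n)) : auxInv σ →+ ZMod 2 where
  toFun x := ∑ i, x.1 i
  map_zero' := by simp
  map_add' a b := by simp [Finset.sum_add_distrib]

theorem aux_card_ker {n : ℕ} (σ : Equiv.Perm (Fin n)) (p : Fin n) (hp : σ p = p) :
    Nat.card (auxSum σ).ker * 2 = Nat.card (auxInv σ) := by
  have hs : Function.Surjective (auxSum σ) := by
    intro c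
    refine ⟨⟨Pi.single p c, ?_⟩, ?_⟩
    · intro i
      by_cases h : i = p
      · subst h; rw [hp]
      · have h' : σ i ≠ p := fun e => h (σ.injective (e.trans hp.symm))
        simp [h, h']
    · change ∑ i, (Pi.single p c : Fin n → ZMod 2) i = c
      simp
  rw [← AddSubgroup.card_mul_index (auxSum σ).ker, AddSubgroup.index_ker,
    AddMonoidHom.range_eq_top.mpr hs]
  simp

/-- An involution `σ` of the `2g+2` branch points with exactly `2k` fixed points
(modelling complex conjugation on a hyperelliptic surface defined by a real polynomial
with `2k` real branch points) fixes exactly `2^{g+k-1}` elements of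
`J = V ⧸ W ≅ (ℤ/2)^{2g}`, i.e. `2^{g+k-1}` two-spin structures. -/
theorem conj_fixed_spin_count (g k : ℕ) (hg : 1 ≤ g) (hk : 1 ≤ k) (hk' : k ≤ g + 1)
    (σ : Equiv.Perm (Fin (2 * g + 2)))
    (hinv : ∀ i, σ (σ i) = i)
    (hfix : Nat.card {i : Fin (2 * g + 2) | σ i = i} = 2 * k)
    (V : AddSubgroup (Fin (2 * g + 2) → ZMod 2))
    (hV : ∀ x : Fin (2 * g + 2) → ZMod 2, x ∈ V ↔ ∑ i, x i = 0)
    (W : AddSubgroup ↥V)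
    (hW : W = AddSubgroup.closure {v : ↥V | (v : Fin (2 * g + 2) → ZMod 2) = 1})
    (σs : (↥V ⧸ W) →+ (↥V ⧸ W))
    (hσs : ∀ x y : ↥V, (y : Fin (2 * g + 2) → ZMod 2) = (x : Fin (2 * g + 2) → ZMod 2) ∘ σ →
      σs (QuotientAddGroup.mk x) = QuotientAddGroup.mk y) :
    Nat.card {z : ↥V ⧸ W | σs z = z} = 2 ^ (g + k - 1) := by
  classical
  have hfix' : Fintype.card {i : Fin (2 * g + 2) // σ i = i} = 2 * k := by
    rw [← hfix, ← Nat.card_eq_fintype_card]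
    rfl
  obtain ⟨p, hp⟩ : ∃ p, σ p = p := by
    have : 0 < Fintype.card {i : Fin (2 * g + 2) // σ i = i} := by omega
    obtain ⟨q⟩ := Fintype.card_pos_iff.mp this
    exact ⟨q.1, q.2⟩
  have hr := aux_card_reps σ hinv
  have hA := aux_card_inv σ hinv
  have hr' : Fintype.card {i : Fin (2 * g + 2) // i ≤ σ i} = (g + k - 1) + 1 + 1 := by omega
  have hK := aux_card_ker σ p hp
  rw [hA, hr', pow_succ] at hK
  have hK' : Nat.card (auxSum σ).ker = 2 ^ (g + k - 1 + 1) := by omega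
  have h1V : (1 : Fin (2 * g + 2) → ZMod 2) ∈ V := by
    rw [hV]
    have h2 : (2 : ZMod 2) = 0 := by decide
    simp [h2]
  have hWm : ∀ v : V, v ∈ W ↔ (v : Fin (2 * g + 2) → ZMod 2) = 0 ∨
      (v : Fin (2 * g + 2) → ZMod 2) = 1 := by
    intro v
    have hset : {v : ↥V | (v : Fin (2 * g + 2) → ZMod 2) = 1} = {⟨1, h1V⟩} := by
      ext v
      simp [Subtype.ext_iff]
    rw [hW, hset, AddSubgroup.mem_closure_singleton]
    constructor
    · rintro ⟨m, rfl⟩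
      have hc : ((m : ZMod 2) = 0) ∨ ((m : ZMod 2) = 1) := by
        generalize (m : ZMod 2) = c
        revert c
        decide
      rcases hc with hc | hc
      · left; ext i; simp [hc]
      · right; ext i; simp [hc]
    · rintro (h | h)
      · exact ⟨0, by ext i; simp [h]⟩
      · exact ⟨1, by ext i; simp [h]⟩
  let ι : (auxSum σ).ker →+ V :=
    { toFun := fun x => ⟨x.1.1, (hV _).mpr x.2⟩
      map_zero' := rfl
      map_add' := fun _ _ => rfl }
  let ψ : (auxSum σ).ker →+ V ⧸ W := (QuotientAddGroup.mk' W).comp ι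
  have hker : Nat.card ψ.ker = 2 := by
    have hmem : ∀ x : (auxSum σ).ker, x ∈ ψ.ker ↔ x.1.1 = 0 ∨ x.1.1 = 1 := by
      intro x
      exact (QuotientAddGroup.eq_zero_iff (ι x)).trans (hWm (ι x))
    let one : (auxSum σ).ker := ⟨⟨1, fun _ => rfl⟩, (hV 1).mp h1V⟩
    have hset : (ψ.ker : Set (auxSum σ).ker) = {0, one} := by
      ext x
      rw [SetLike.mem_coe, hmem]
      simp only [Set.mem_insert_iff, Set.mem_singleton_iff, Subtype.ext_iff]
      rfl
    have hne : (0 : (auxSum σ).ker) ≠ one := by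
      intro h
      have h' : (0 : Fin (2 * g + 2) → ZMod 2) = 1 := congrArg (fun x => x.1.1) h
      exact zero_ne_one (congrFun h' p)
    have := Set.ncard_pair hne
    rw [← hset] at this
    exact this
  have hrange : (ψ.range : Set (V ⧸ W)) = {z | σs z = z} := by
    ext z
    simp only [SetLike.mem_coe, AddMonoidHom.mem_range, Set.mem_ofPred_eq]
    constructor
    · rintro ⟨x, rfl⟩
      exact hσs (ι x) (ι x) (funext fun i => (x.1.2 i).symm)
    · intro hz
      obtain ⟨x, rfl⟩ := QuotientAddGroup.mk_surjective z
      have hyV : (x : Fin (2 * g + 2) → ZMod 2) ∘ σ ∈ V := by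
        rw [hV]
        have hx := (hV _).mp x.2
        rw [← hx]
        exact Equiv.sum_comp σ (x : Fin (2 * g + 2) → ZMod 2)
      rw [hσs x ⟨_, hyV⟩ rfl, eq_comm, QuotientAddGroup.eq, hWm] at hz
      have hxi : ∀ i, (x : Fin (2 * g + 2) → ZMod 2) (σ i) = (x : Fin (2 * g + 2) → ZMod 2) i := by
        rcases hz with hz | hz
        · intro i
          have := congrFun hz i
          simp only [AddSubgroup.coe_add, AddSubgroup.coe_neg, Pi.add_apply, Pi.neg_apply,
            Function.comp_apply, Pi.zero_apply] at this
          exact (neg_add_eq_zero.mp this).symm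
        · exfalso
          have := congrFun hz p
          simp only [AddSubgroup.coe_add, AddSubgroup.coe_neg, Pi.add_apply, Pi.neg_apply,
            Function.comp_apply, Pi.one_apply, hp, neg_add_cancel] at this
          exact zero_ne_one this
      exact ⟨⟨⟨x.1, hxi⟩, (hV _).mp x.2⟩, rfl⟩
  have hmul := AddSubgroup.card_mul_index ψ.ker
  rw [AddSubgroup.index_ker, hker, hK', pow_succ] at hmul
  rw [← hrange]
  change Nat.card ψ.range = _
  omega
end

section
/- Let g be odd and let σ be a fixed-point-free involution of Fin (2g+2) (so σ has exactly g+1 orbits, each of size 2; this models the antipodal symmetry τ(z) = −1/z̄ acting on the branch points). Then the subgroup of J generated by the images of the indicator functions of the g+1 orbits of σ (i.e., by the classes of the divisors p_i + τ(p_i) − 2·p_r) has cardinality 2^g, i.e., it is isomorphic to (ℤ/2)^g. (This is the group J₂^τ computed in the paper for a hyperelliptic surface of odd genus with the antipodal anti-holomorphic involution.) -/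
/-- For a hyperelliptic surface of odd genus `g` with the antipodal symmetry
(a fixed-point-free involution `σ` of the `2g+2` branch points), the subgroup
of `J = V ⧸ W` generated by the classes of the indicator functions of the `g+1`
orbits of `σ` (the divisors `p_i + τ(p_i) - 2·p_r`) has cardinality `2^g`. -/
theorem antipodal_orbit_subgroup_card (g : ℕ) (hg : Odd g)
    (σ : Equiv.Perm (Fin (2 * g + 2)))
    (hfree : ∀ i, σ i ≠ i)
    (hinv : ∀ i, σ (σ i) = i)
    (V : AddSubgroup (Fin (2 * g + 2) → ZMod 2))
    (hV : ∀ x : Fin (2 * g + 2) → ZMod 2, x ∈ V ↔ ∑ i, x i = 0)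
    (W : AddSubgroup ↥V)
    (hW : W = AddSubgroup.closure {v : ↥V | (v : Fin (2 * g + 2) → ZMod 2) = 1}) :
    Nat.card (AddSubgroup.closure {z : ↥V ⧸ W | ∃ (i : Fin (2 * g + 2)) (v : ↥V),
        (∀ j, (v : Fin (2 * g + 2) → ZMod 2) j = if j = i ∨ j = σ i then 1 else 0) ∧
        z = QuotientAddGroup.mk v}) = 2 ^ g := by
  classical
  have two : ∀ a : ZMod 2, a + a = 0 := by decide
  -- invariant functions sum to zero
  have hsum : ∀ x : Fin (2 * g + 2) → ZMod 2, (∀ i, x (σ i) = x i) → x ∈ V := by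
    intro x hx
    rw [hV]
    refine Finset.sum_involution (fun i _ => σ i) ?_ ?_ ?_ ?_
    · intro i _
      rw [hx, two]
    · intro i _ _
      exact hfree i
    · intro i _
      exact Finset.mem_univ _
    · intro i _
      exact hinv i
  let F : AddSubgroup V :=
    { carrier := {v | ∀ i, v.1 (σ i) = v.1 i}
      zero_mem' := by intro i; rfl
      add_mem' := by
        intro a b ha hb i
        have h1 := ha i
        have h2 := hb i
        simp [h1, h2]
      neg_mem' := by
        intro a ha i
        have h1 := ha i
        simp [h1] }
  have memF : ∀ v : V, v ∈ F ↔ ∀ i, v.1 (σ i) = v.1 i := fun v => Iff.rfl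
  have hind : ∀ i j, (if σ j = i ∨ σ j = σ i then (1 : ZMod 2) else 0)
      = if j = i ∨ j = σ i then 1 else 0 := by
    intro i j
    have h1 : σ j = i ↔ j = σ i := by
      constructor
      · intro h; rw [← h, hinv]
      · intro h; rw [h, hinv]
    have h2 : σ j = σ i ↔ j = i := σ.injective.eq_iff
    simp only [h1, h2, or_comm]
  let e : Fin (2 * g + 2) → V := fun i =>
    ⟨fun j => if j = i ∨ j = σ i then 1 else 0, hsum _ (hind i)⟩
  let R : Finset (Fin (2 * g + 2)) := Finset.univ.filter (fun i => i < σ i)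
  have memR : ∀ i, i ∈ R ↔ i < σ i := by intro i; simp [R]
  have hRσ : ∀ i, i ∉ R → σ i ∈ R := by
    intro i hi
    rw [memR] at hi ⊢
    rw [hinv]
    exact lt_of_le_of_ne (not_lt.mp hi) (hfree i)
  have hRσ' : ∀ i, i ∈ R → σ i ∉ R := by
    intro i hi
    rw [memR] at hi ⊢
    rw [hinv]
    exact not_lt.mpr hi.le
  have cardR : R.card = g + 1 := by
    have h1 : R.card = Rᶜ.card := by
      refine Finset.card_bij (fun i _ => σ i) ?_ ?_ ?_
      · intro i hi
        exact Finset.mem_compl.mpr (hRσ' i hi)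
      · intro a _ b _ h
        exact σ.injective h
      · intro b hb
        exact ⟨σ b, hRσ b (Finset.mem_compl.mp hb), hinv b⟩
    have h2 := Finset.card_add_card_compl R
    rw [Fintype.card_fin] at h2
    omega
  have cardF : Nat.card F = 2 ^ (g + 1) := by
    let E : F ≃ (R → ZMod 2) :=
      { toFun := fun v r => v.1.1 r.1
        invFun := fun f => ⟨⟨fun j => if h : j ∈ R then f ⟨j, h⟩ else f ⟨σ j, hRσ j h⟩,
          hsum _ (by
            intro i
            by_cases h : i ∈ R
            · simp [h, hRσ' i h, hinv]
            · simp [h, hRσ i h])⟩, by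
            intro i
            by_cases h : i ∈ R
            · simp [h, hRσ' i h, hinv]
            · simp [h, hRσ i h]⟩
        left_inv := by
          intro v
          apply Subtype.ext
          apply Subtype.ext
          funext j
          by_cases h : j ∈ R
          · simp [h]
          · simp only [h, dite_false]
            exact v.2 j
        right_inv := by
          intro f
          funext r
          simp }
    rw [Nat.card_congr E]
    simp [cardR]
  let S : Set V := {v | ∃ i, v = e i}
  have hclS : AddSubgroup.closure S = F := by
    apply le_antisymm
    · rw [AddSubgroup.closure_le]
      rintro v ⟨i, rfl⟩
      exact hind i
    · intro v hv
      have hv' : v = ∑ i ∈ R, (v.1 i).val • e i := by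
        apply Subtype.ext
        funext j
        rw [AddSubgroup.val_finsetSum, Finset.sum_apply]
        have h0 : ∀ i, ((((v.1 i).val • e i : V)) : Fin (2 * g + 2) → ZMod 2) j
            = v.1 i * (if j = i ∨ j = σ i then 1 else 0) := by
          intro i
          rw [AddSubgroup.coe_nsmul, Pi.smul_apply, nsmul_eq_mul, ZMod.natCast_zmod_val]
        simp only [h0]
        by_cases h : j ∈ R
        · rw [Finset.sum_eq_single j]
          · simp
          · intro b hb hbj
            have : ¬ (j = b ∨ j = σ b) := by
              rintro (h1 | h1)
              · exact hbj h1.symm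
              · exact hRσ' b hb (h1 ▸ h)
            simp [this]
          · intro h1; exact absurd h h1
        · rw [Finset.sum_eq_single (σ j)]
          · rw [hv j]; simp [hinv]
          · intro b hb hbj
            have : ¬ (j = b ∨ j = σ b) := by
              rintro (h1 | h1)
              · exact h (h1 ▸ hb)
              · exact hbj (by rw [h1, hinv])
            simp [this]
          · intro h1; exact absurd (hRσ j h) h1
      rw [hv']
      refine AddSubgroup.sum_mem _ fun i _ => ?_
      have hi : e i ∈ AddSubgroup.closure S := AddSubgroup.subset_closure ⟨i, rfl⟩
      exact AddSubgroup.nsmul_mem _ hi _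
  have hset : {z : ↥V ⧸ W | ∃ (i : Fin (2 * g + 2)) (v : ↥V),
        (∀ j, (v : Fin (2 * g + 2) → ZMod 2) j = if j = i ∨ j = σ i then 1 else 0) ∧
        z = QuotientAddGroup.mk v} = (QuotientAddGroup.mk' W) '' S := by
    ext z
    constructor
    · rintro ⟨i, v, hv, rfl⟩
      exact ⟨v, ⟨i, Subtype.ext (funext hv)⟩, rfl⟩
    · rintro ⟨v, ⟨i, rfl⟩, rfl⟩
      exact ⟨i, e i, fun j => rfl, rfl⟩
  let o : V := ⟨1, hsum 1 (fun _ => rfl)⟩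
  have hWo : W = AddSubgroup.zmultiples o := by
    rw [hW, AddSubgroup.zmultiples_eq_closure]
    congr 1
    ext v
    exact ⟨fun h => Subtype.ext h, fun h => congrArg Subtype.val h⟩
  have cardW : Nat.card W = 2 := by
    rw [hWo, Nat.card_zmultiples]
    have : Fact (Nat.Prime 2) := ⟨Nat.prime_two⟩
    apply addOrderOf_eq_prime
    · rw [two_nsmul]
      apply Subtype.ext
      funext j
      exact two 1
    · intro h
      have := congrFun (congrArg Subtype.val h) 0
      exact one_ne_zero this
  have hWF : W ≤ F := by
    rw [hWo, AddSubgroup.zmultiples_le]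
    intro i
    rfl
  rw [hset, ← AddMonoidHom.map_closure, hclS]
  let f : F →+ V ⧸ W := (QuotientAddGroup.mk' W).comp F.subtype
  have hrange : f.range = F.map (QuotientAddGroup.mk' W) := by
    rw [AddMonoidHom.range_comp, AddSubgroup.range_subtype]
  have hker : f.ker = W.addSubgroupOf F := by
    rw [← AddMonoidHom.comap_ker, QuotientAddGroup.ker_mk']
    rfl
  have hc := AddSubgroup.card_eq_card_quotient_mul_card_addSubgroup f.ker
  rw [Nat.card_congr (QuotientAddGroup.quotientKerEquivRange f).toEquiv, hrange, hker,
    Nat.card_congr (AddSubgroup.addSubgroupOfEquivOfLe hWF).toEquiv, cardW, cardF, pow_succ] at hc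
  omega
end

section
/- Let g ≥ 1, let n be an odd positive integer, and let σ be a permutation of Fin (2g+2) every orbit of which has exactly n elements (so n divides 2g+2 and σ fixes no points; this models an automorphism of odd order n of a hyperelliptic surface fixing no branch points). Then the subgroup of σ*-fixed elements {y ∈ J : σ* y = y} has cardinality 2^{(2g+2)/n − 2}. (This is the statement that an odd-order automorphism of a hyperelliptic Riemann surface of genus g fixing no branch points fixes exactly 2^{(2g+2)/n − 2} two-spin structures.) -/
open Classical in
theorem fiber_card_aux {ι : Type*} [Fintype ι] (n : ℕ) (hn' : 0 < n) (σ : Equiv.Perm ι)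
    (horb : ∀ i : ι, (σ ^ n) i = i ∧ ∀ m : ℕ, 0 < m → m < n → (σ ^ m) i ≠ i) (i : ι) :
    (Finset.univ.filter fun j => σ.SameCycle i j).card = n := by
  have hs : (Finset.univ.filter fun j => σ.SameCycle i j)
      = (Finset.range n).image fun k => (σ ^ k) i := by
    ext j
    simp only [Finset.mem_filter, Finset.mem_univ, true_and, Finset.mem_image, Finset.mem_range]
    constructor
    · rintro ⟨k, hk⟩
      have h1 : σ ^ n = 1 := by ext j; simpa using (horb j).1
      have hnz : (n : ℤ) ≠ 0 := by exact_mod_cast hn'.ne'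
      refine ⟨(k % n).toNat, ?_, ?_⟩
      · have := Int.emod_lt_of_pos k (b := (n : ℤ)) (by exact_mod_cast hn')
        have := Int.emod_nonneg k hnz
        omega
      · rw [← hk]
        have h2 : σ ^ (k % n) = σ ^ k := by
          conv_rhs => rw [← Int.emod_add_mul_ediv k n, zpow_add, zpow_mul]
          simp [h1]
        rw [← h2, ← zpow_natCast, Int.toNat_of_nonneg (Int.emod_nonneg k hnz)]
    · rintro ⟨k, _, rfl⟩
      exact ⟨k, by simp⟩
  rw [hs, Finset.card_image_of_injOn, Finset.card_range]
  have key : ∀ a b : ℕ, a < b → b < n → (σ ^ a) i ≠ (σ ^ b) i := by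
    intro a b hab hb h
    apply (horb i).2 (b - a) (by omega) (by omega)
    apply (σ ^ a).injective
    rw [← Equiv.Perm.mul_apply, ← pow_add, h]
    congr 2; omega
  intro a ha b hb h
  simp only [Finset.coe_range, Set.mem_Iio] at ha hb
  rcases lt_trichotomy a b with hab | hab | hab
  · exact (key a b hab hb h).elim
  · exact hab
  · exact (key b a hab ha h.symm).elim

/-- An odd-order automorphism of a hyperelliptic surface of genus `g` fixing no branch
points (modelled as a permutation `σ` of the `2g+2` branch points all of whose orbits
have exactly `n` elements, `n` odd) fixes exactly `2^{(2g+2)/n - 2}` two-spin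
structures, i.e. elements of `J = V ⧸ W`. -/
theorem odd_auto_no_fixed_spin_count (g n : ℕ) (hg : 1 ≤ g) (hn : Odd n) (hn' : 0 < n)
    (σ : Equiv.Perm (Fin (2 * g + 2)))
    (horb : ∀ i : Fin (2 * g + 2),
      (σ ^ n) i = i ∧ ∀ m : ℕ, 0 < m → m < n → (σ ^ m) i ≠ i)
    (V : AddSubgroup (Fin (2 * g + 2) → ZMod 2))
    (hV : ∀ x : Fin (2 * g + 2) → ZMod 2, x ∈ V ↔ ∑ i, x i = 0)
    (W : AddSubgroup ↥V)
    (hW : W = AddSubgroup.closure {v : ↥V | (v : Fin (2 * g + 2) → ZMod 2) = 1})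
    (σs : (↥V ⧸ W) →+ (↥V ⧸ W))
    (hσs : ∀ x y : ↥V, (y : Fin (2 * g + 2) → ZMod 2) = (x : Fin (2 * g + 2) → ZMod 2) ∘ σ →
      σs (QuotientAddGroup.mk x) = QuotientAddGroup.mk y) :
    Nat.card {z : ↥V ⧸ W | σs z = z} = 2 ^ ((2 * g + 2) / n - 2) := by
  classical
  let S := Equiv.Perm.SameCycle.setoid σ
  let Q := Quotient S
  let π : Fin (2 * g + 2) → Q := fun i => Quotient.mk S i
  have hπ : ∀ i j, π i = π j ↔ σ.SameCycle i j := fun i j => Quotient.eq (r := S)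
  have hπs : Function.Surjective π := Quotient.mk_surjective
  have hπσ : ∀ i, π (σ i) = π i := fun i => by
    rw [hπ]; exact (Equiv.Perm.sameCycle_apply_left).2 (Equiv.Perm.SameCycle.refl σ i)
  have hfib : ∀ q : Q, (Finset.univ.filter fun j => π j = q).card = n := by
    intro q
    obtain ⟨i, rfl⟩ := hπs q
    rw [← fiber_card_aux n hn' σ horb i]
    congr 1
    ext j
    simp only [Finset.mem_filter, Finset.mem_univ, true_and, hπ]
    exact Equiv.Perm.sameCycle_comm
  have hcard : 2 * g + 2 = Fintype.card Q * n := by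
    have h := Finset.card_eq_sum_card_fiberwise (f := π) (s := Finset.univ) (t := Finset.univ)
      (fun _ _ => by simp)
    simp only [hfib] at h
    simpa using h
  have hn2 : (n : ZMod 2) = 1 := (ZMod.natCast_eq_one_iff_odd).2 hn
  have hsum : ∀ f : Q → ZMod 2, ∑ i, f (π i) = ∑ q, f q := by
    intro f
    rw [← Finset.sum_fiberwise Finset.univ π]
    refine Finset.sum_congr rfl fun q _ => ?_
    rw [Finset.sum_congr rfl (g := fun _ => f q)]
    · rw [Finset.sum_const, hfib, nsmul_eq_mul, hn2, one_mul]
    · intro i hi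
      rw [(Finset.mem_filter.1 hi).2]
  set r := Fintype.card Q with hr
  have hreven : Even r := by
    have : Even (r * n) := by rw [← hcard]; exact ⟨g + 1, by ring⟩
    rcases Nat.even_mul.1 this with h | h
    · exact h
    · exact absurd h (Nat.not_even_iff_odd.2 hn)
  have hrpos : 0 < r := by
    rcases Nat.eq_zero_or_pos r with h | h
    · rw [h] at hcard; omega
    · exact h
  have hr2 : 2 ≤ r := by obtain ⟨k, hk⟩ := hreven; omega
  have hdiv : (2 * g + 2) / n = r := by rw [hcard]; exact Nat.mul_div_cancel _ hn'
  rw [hdiv]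
  -- W
  have h1V : (1 : Fin (2 * g + 2) → ZMod 2) ∈ V := by
    rw [hV]
    simp only [Pi.one_apply, Finset.sum_const, Finset.card_univ, Fintype.card_fin, nsmul_eq_mul,
      mul_one]
    exact (ZMod.natCast_eq_zero_iff_even).2 ⟨g + 1, by ring⟩
  have hz2 : ∀ a : ZMod 2, a = 0 ∨ a = 1 := by decide
  have hWmem : ∀ v : V, v ∈ W ↔ (v : Fin (2 * g + 2) → ZMod 2) = 0 ∨
      (v : Fin (2 * g + 2) → ZMod 2) = 1 := by
    intro v
    have hset : {v : ↥V | (v : Fin (2 * g + 2) → ZMod 2) = 1} = {⟨1, h1V⟩} := by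
      ext w; simp [Subtype.ext_iff]
    rw [hW, hset, AddSubgroup.mem_closure_singleton]
    constructor
    · rintro ⟨k, rfl⟩
      rcases hz2 (k : ZMod 2) with h | h
      · left; ext i; simp [h]
      · right; ext i; simp [h]
    · rintro (h | h)
      · exact ⟨0, by ext i; simp [h]⟩
      · exact ⟨1, by ext i; simp [h]⟩
  -- kernel of the sum
  let s : (Q → ZMod 2) →+ ZMod 2 :=
    { toFun := fun f => ∑ q, f q
      map_zero' := by simp
      map_add' := fun f h => by simp [Finset.sum_add_distrib] }
  have hs : Function.Surjective s := by
    intro a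
    obtain ⟨q⟩ : Nonempty Q := Fintype.card_pos_iff.1 hrpos
    exact ⟨Pi.single q a, by simp [s]⟩
  have hK : Nat.card s.ker * 2 = 2 ^ r := by
    have h := AddSubgroup.card_mul_index s.ker
    rw [AddSubgroup.index_ker, AddMonoidHom.range_eq_top.2 hs] at h
    simpa [hr] using h
  let φ : s.ker →+ (↥V ⧸ W) := (QuotientAddGroup.mk' W).comp
    { toFun := fun f => ⟨fun i => f.1 (π i), by rw [hV, hsum]; exact f.2⟩
      map_zero' := rfl
      map_add' := fun _ _ => rfl }
  have hφ : ∀ f : s.ker, ∀ v : V, (∀ i, v.1 i = f.1 (π i)) → φ f = QuotientAddGroup.mk v := by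
    intro f v h
    have : v = ⟨fun i => f.1 (π i), by rw [hV, hsum]; exact f.2⟩ := by
      ext i; exact h i
    rw [this]; rfl
  have hker : Nat.card φ.ker = 2 := by
    have h1K : (1 : Q → ZMod 2) ∈ s.ker := by
      rw [AddMonoidHom.mem_ker]
      simp only [s, AddMonoidHom.coe_mk, ZeroHom.coe_mk, Pi.one_apply, Finset.sum_const,
        Finset.card_univ, nsmul_eq_mul, mul_one]
      exact (ZMod.natCast_eq_zero_iff_even).2 hreven
    have hset : (φ.ker : Set s.ker) = {0, ⟨1, h1K⟩} := by
      ext f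
      simp only [SetLike.mem_coe, AddMonoidHom.mem_ker, Set.mem_insert_iff, Set.mem_singleton_iff]
      rw [hφ f ⟨fun i => f.1 (π i), by rw [hV, hsum]; exact f.2⟩ (fun _ => rfl),
        QuotientAddGroup.eq_zero_iff, hWmem]
      refine or_congr ?_ ?_
      · constructor
        · intro h
          ext q
          obtain ⟨i, rfl⟩ := hπs q
          exact congrFun h i
        · rintro rfl; rfl
      · constructor
        · intro h
          ext q
          obtain ⟨i, rfl⟩ := hπs q
          exact congrFun h i
        · rintro rfl; rfl
    have h2 : Nat.card φ.ker = (φ.ker : Set s.ker).ncard := rfl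
    rw [h2, hset, Set.ncard_pair]
    intro h
    obtain ⟨q⟩ : Nonempty Q := Fintype.card_pos_iff.1 hrpos
    have := congrFun (congrArg Subtype.val h) q
    exact absurd this (by simp)
  have hVσ : ∀ x : V, (x : Fin (2 * g + 2) → ZMod 2) ∘ σ ∈ V := by
    intro x
    rw [hV, ← (hV x.1).1 x.2]
    exact Equiv.sum_comp σ x.1
  have hrange : {z : ↥V ⧸ W | σs z = z} = (φ.range : Set (↥V ⧸ W)) := by
    ext z
    obtain ⟨x, rfl⟩ := QuotientAddGroup.mk_surjective z
    simp only [Set.mem_ofPred_eq, SetLike.mem_coe, AddMonoidHom.mem_range]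
    constructor
    · intro h
      rw [hσs x ⟨_, hVσ x⟩ rfl, eq_comm, QuotientAddGroup.eq, hWmem] at h
      have hc : ∃ c : ZMod 2, ∀ i, x.1 (σ i) = x.1 i + c := by
        rcases h with h | h
        · refine ⟨0, fun i => ?_⟩
          have this : -x.1 i + x.1 (σ i) = 0 := congrFun h i
          linear_combination this
        · refine ⟨1, fun i => ?_⟩
          have this : -x.1 i + x.1 (σ i) = 1 := congrFun h i
          linear_combination this
      obtain ⟨c, hc⟩ := hc
      have hit : ∀ k : ℕ, ∀ i, x.1 ((σ ^ k) i) = x.1 i + k * c := by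
        intro k
        induction k with
        | zero => intro i; simp
        | succ k ih =>
          intro i
          rw [pow_succ', Equiv.Perm.mul_apply, hc, ih]
          push_cast; ring
      have hc0 : c = 0 := by
        have i : Fin (2 * g + 2) := ⟨0, by omega⟩
        have := hit n i
        rw [(horb i).1, hn2] at this
        linear_combination -this
      subst hc0
      have hconst : ∀ i j, π i = π j → x.1 i = x.1 j := by
        intro i j hij
        have hmem : j ∈ Finset.univ.filter fun j => σ.SameCycle i j := by
          simpa using (hπ i j).1 hij
        obtain ⟨k, _, rfl⟩ := ((hπ i j).1 hij).exists_pow_eq'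
        rw [hit]; simp
      let f : Q → ZMod 2 := fun q => x.1 (Function.surjInv hπs q)
      have hf : ∀ i, x.1 i = f (π i) := fun i =>
        hconst _ _ (Function.surjInv_eq hπs _).symm
      refine ⟨⟨f, ?_⟩, hφ _ _ hf⟩
      change ∑ q, f q = 0
      rw [← hsum, ← (hV x.1).1 x.2]
      exact Finset.sum_congr rfl fun i _ => (hf i).symm
    · rintro ⟨f, hf⟩
      rw [← hf, hφ f ⟨fun i => f.1 (π i), by rw [hV, hsum]; exact f.2⟩ (fun _ => rfl)]
      apply hσs
      ext i
      simp [hπσ]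
  have hfin : Nat.card φ.range * 2 = Nat.card s.ker := by
    have h := AddSubgroup.card_mul_index φ.ker
    rw [AddSubgroup.index_ker, hker] at h
    rw [← h, mul_comm]
  rw [hrange]
  change Nat.card φ.range = _
  obtain ⟨m, hm⟩ := Nat.exists_eq_add_of_le hr2
  rw [← hfin, hm, pow_add] at hK
  rw [hm, Nat.add_sub_cancel_left]
  omega
end

section
/- Let g ≥ 1, let n be an odd positive integer, and let σ be a permutation of Fin (2g+2) with exactly one fixed point such that every other orbit has exactly n elements (so n divides 2g+1; this models an automorphism of odd order n of a hyperelliptic surface fixing exactly one branch point). Then the subgroup of σ*-fixed elements {y ∈ J : σ* y = y} has cardinality 2^{(2g+1)/n − 1}. (This is the statement that an odd-order automorphism of a hyperelliptic Riemann surface of genus g fixing exactly one branch point fixes exactly 2^{(2g+1)/n − 1} two-spin structures.) -/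
section Aux

open Finset

lemma aux_sameCycle_card {α : Type*} [Fintype α] [DecidableEq α] (σ : Equiv.Perm α) (n : ℕ)
    (hn : 0 < n) (a : α) (h1 : (σ ^ n) a = a)
    (h2 : ∀ m : ℕ, 0 < m → m < n → (σ ^ m) a ≠ a) :
    Nat.card {b : α // σ.SameCycle a b} = n := by
  have hb : Function.Bijective (fun j : Fin n =>
      (⟨(σ ^ (j : ℕ)) a, ⟨(j : ℕ), by simp⟩⟩ : {b : α // σ.SameCycle a b})) := by
    constructor
    · have key : ∀ i j : ℕ, i < j → j < n → (σ ^ i) a ≠ (σ ^ j) a := by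
        intro i j hij hj h
        apply h2 (j - i) (by omega) (by omega)
        apply (σ ^ i).injective
        rw [h, ← Equiv.Perm.mul_apply, ← pow_add]
        congr 2
        omega
      intro i j h
      have h' : (σ ^ (i : ℕ)) a = (σ ^ (j : ℕ)) a := congrArg Subtype.val h
      rcases lt_trichotomy (i : ℕ) (j : ℕ) with hl | hl | hl
      · exact absurd h' (key _ _ hl j.2)
      · exact Fin.ext hl
      · exact absurd h'.symm (key _ _ hl i.2)
    · rintro ⟨b, z, hz⟩
      have hn0 : (n : ℤ) ≠ 0 := by exact_mod_cast hn.ne'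
      have hnn := Int.emod_nonneg z hn0
      have hlt := Int.emod_lt_of_pos z (by exact_mod_cast hn : (0 : ℤ) < n)
      refine ⟨⟨(z % n).toNat, by omega⟩, ?_⟩
      apply Subtype.ext
      change (σ ^ ((z % n).toNat)) a = b
      rw [← zpow_natCast, Int.toNat_of_nonneg hnn, ← hz]
      conv_rhs => rw [← Int.emod_add_mul_ediv z n, zpow_add, zpow_mul, zpow_natCast,
        Equiv.Perm.mul_apply]
      congr 1
      exact (Equiv.Perm.zpow_apply_eq_self_of_apply_eq_self h1 _).symm
  rw [← Nat.card_eq_of_bijective _ hb, Nat.card_fin]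

lemma aux_card_sum_zero (Q : Type*) [Fintype Q] [Nonempty Q] :
    Nat.card {f : Q → ZMod 2 // ∑ q, f q = 0} = 2 ^ (Fintype.card Q - 1) := by
  classical
  let φ : (Q → ZMod 2) →+ ZMod 2 :=
    { toFun := fun f => ∑ q, f q
      map_zero' := by simp
      map_add' := by intro f g; simp [Finset.sum_add_distrib] }
  have hsurj : Function.Surjective φ := by
    intro c
    refine ⟨Pi.single (Classical.arbitrary Q) c, ?_⟩
    change ∑ q, (Pi.single (Classical.arbitrary Q) c : Q → ZMod 2) q = c
    simp
  have h1 : Nat.card {f : Q → ZMod 2 // ∑ q, f q = 0} = Nat.card φ.ker := rfl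
  have h2 := AddSubgroup.card_eq_card_quotient_mul_card_addSubgroup φ.ker
  have h3 : Nat.card ((Q → ZMod 2) ⧸ φ.ker) = 2 := by
    rw [Nat.card_congr (QuotientAddGroup.quotientKerEquivOfSurjective φ hsurj).toEquiv]
    simp
  rw [h3] at h2
  have h4 : Nat.card (Q → ZMod 2) = 2 ^ Fintype.card Q := by
    simp [Nat.card_eq_fintype_card]
  have hpos : 0 < Fintype.card Q := Fintype.card_pos
  obtain ⟨k, hk⟩ : ∃ k, Fintype.card Q = k + 1 := ⟨Fintype.card Q - 1, by omega⟩
  rw [h4, hk, pow_succ] at h2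
  rw [h1, hk]
  simp only [Nat.add_sub_cancel]
  omega

lemma aux_sum_quot {S Q M : Type*} [Fintype S] [Fintype Q] [AddCommMonoid M] (p : S → Q) (n : ℕ)
    (hp : ∀ q, Nat.card {s // p s = q} = n) (f : Q → M) :
    ∑ s, f (p s) = n • ∑ q, f q := by
  classical
  rw [← Finset.sum_fiberwise (s := univ) (g := p), Finset.smul_sum]
  refine Finset.sum_congr rfl fun q _ => ?_
  rw [Finset.sum_congr rfl (g := fun _ => f q)
    (fun s hs => by rw [(Finset.mem_filter.mp hs).2]), Finset.sum_const]
  congr 1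
  rw [← hp q, Nat.card_eq_fintype_card, Fintype.card_subtype]

end Aux


/-- An odd-order automorphism of a hyperelliptic surface of genus `g` fixing exactly one
branch point (modelled as a permutation `σ` of the `2g+2` branch points with exactly one
fixed point, all other orbits having exactly `n` elements, `n` odd) fixes exactly
`2^{(2g+1)/n - 1}` two-spin structures, i.e. elements of `J = V ⧸ W`. -/
theorem odd_auto_one_fixed_spin_count (g n : ℕ) (hg : 1 ≤ g) (hn : Odd n) (hn' : 0 < n)
    (σ : Equiv.Perm (Fin (2 * g + 2))) (i₀ : Fin (2 * g + 2))
    (hfix : ∀ i, σ i = i ↔ i = i₀)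
    (horb : ∀ i : Fin (2 * g + 2), i ≠ i₀ →
      (σ ^ n) i = i ∧ ∀ m : ℕ, 0 < m → m < n → (σ ^ m) i ≠ i)
    (V : AddSubgroup (Fin (2 * g + 2) → ZMod 2))
    (hV : ∀ x : Fin (2 * g + 2) → ZMod 2, x ∈ V ↔ ∑ i, x i = 0)
    (W : AddSubgroup ↥V)
    (hW : W = AddSubgroup.closure {v : ↥V | (v : Fin (2 * g + 2) → ZMod 2) = 1})
    (σs : (↥V ⧸ W) →+ (↥V ⧸ W))
    (hσs : ∀ x y : ↥V, (y : Fin (2 * g + 2) → ZMod 2) = (x : Fin (2 * g + 2) → ZMod 2) ∘ σ →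
      σs (QuotientAddGroup.mk x) = QuotientAddGroup.mk y) :
    Nat.card {z : ↥V ⧸ W | σs z = z} = 2 ^ ((2 * g + 1) / n - 1) := by
  classical
  let r : Setoid {i : Fin (2 * g + 2) // i ≠ i₀} :=
    (Equiv.Perm.SameCycle.setoid σ).comap Subtype.val
  let Q := Quotient r
  let p : {i : Fin (2 * g + 2) // i ≠ i₀} → Q := fun s => Quotient.mk r s
  have hp_eq : ∀ s t, p s = p t ↔ σ.SameCycle s.1 t.1 := fun s t => Quotient.eq (r := r)
  have hσ0 : σ i₀ = i₀ := (hfix i₀).2 rfl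
  have hσne : ∀ i, i ≠ i₀ → σ i ≠ i₀ := fun i hi h => hi (σ.injective (h.trans hσ0.symm))
  have hfib : ∀ q, Nat.card {s // p s = q} = n := by
    intro q
    obtain ⟨a, rfl⟩ : ∃ a, p a = q := Quotient.exists_rep q
    rw [← aux_sameCycle_card σ n hn' a.1 (horb a.1 a.2).1 (horb a.1 a.2).2]
    refine Nat.card_congr ⟨fun s => ⟨s.1.1, ((hp_eq _ _).1 s.2).symm⟩,
      fun b => ⟨⟨b.1, ?_⟩, (hp_eq _ _).2 b.2.symm⟩, fun _ => rfl, fun _ => rfl⟩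
    intro hb
    obtain ⟨z, hz⟩ := b.2
    apply a.2
    apply (σ ^ z).injective
    rw [hz, hb]
    exact (Equiv.Perm.zpow_apply_eq_self_of_apply_eq_self hσ0 _).symm
  have hcard : 2 * g + 1 = n * Fintype.card Q := by
    have h := aux_sum_quot p n hfib (fun _ => (1 : ℕ))
    simpa using h
  have hQne : Nonempty Q := by
    rw [← Fintype.card_pos_iff]
    rcases Nat.eq_zero_or_pos (Fintype.card Q) with h | h
    · rw [h] at hcard; omega
    · exact h
  have hdiv : (2 * g + 1) / n = Fintype.card Q := by
    rw [hcard]; exact Nat.mul_div_cancel_left _ hn'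
  rw [hdiv, ← aux_card_sum_zero Q]
  -- the lift of a function on orbits
  let L : (Q → ZMod 2) → (Fin (2 * g + 2) → ZMod 2) :=
    fun f i => if h : i = i₀ then 0 else f (p ⟨i, h⟩)
  have hL0 : ∀ f, L f i₀ = 0 := fun f => by simp [L]
  have hLne : ∀ f (s : {i : Fin (2 * g + 2) // i ≠ i₀}), L f s.1 = f (p s) := fun f s => by
    simp only [L]
    rw [dif_neg s.2]
  have hnz : ((n : ℕ) : ZMod 2) = 1 := (ZMod.natCast_eq_one_iff_odd).2 hn
  have hLsum : ∀ f, ∑ i, L f i = ∑ q, f q := by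
    intro f
    rw [Fintype.sum_eq_add_sum_subtype_ne _ i₀, hL0, zero_add,
      Finset.sum_congr rfl (fun s _ => hLne f s), aux_sum_quot p n hfib f, nsmul_eq_mul, hnz,
      one_mul]
  have hLσ : ∀ f, L f = L f ∘ σ := by
    intro f
    funext i
    by_cases h : i = i₀
    · subst h; simp [hσ0]
    · have e1 := hLne f ⟨i, h⟩
      have e2 := hLne f ⟨σ i, hσne i h⟩
      simp only [Function.comp_apply]
      rw [e1, e2]
      congr 1
      rw [hp_eq]
      exact Equiv.Perm.sameCycle_apply_right.2 (Equiv.Perm.SameCycle.refl σ i)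
  -- description of `W`
  have hone : (1 : Fin (2 * g + 2) → ZMod 2) ∈ V := by
    rw [hV]
    simp only [Pi.one_apply, Finset.sum_const, Finset.card_univ, Fintype.card_fin, nsmul_eq_mul,
      mul_one]
    rw [ZMod.natCast_eq_zero_iff]
    omega
  have h11 : (1 : Fin (2 * g + 2) → ZMod 2) + 1 = 0 := by
    funext i; exact (by decide : (1 : ZMod 2) + 1 = 0)
  have honeW : (⟨1, hone⟩ : ↥V) ∈ W := by
    rw [hW]; exact AddSubgroup.subset_closure rfl
  have hWd : ∀ v : ↥V, v ∈ W → (v : Fin (2 * g + 2) → ZMod 2) = 0 ∨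
      (v : Fin (2 * g + 2) → ZMod 2) = 1 := by
    intro v hv
    rw [hW] at hv
    induction hv using AddSubgroup.closure_induction with
    | mem x hx => exact Or.inr hx
    | zero => exact Or.inl rfl
    | add x y _ _ hx hy =>
      rw [AddSubgroup.coe_add]
      rcases hx with hx | hx <;> rcases hy with hy | hy <;> rw [hx, hy] <;> simp [h11]
    | neg x _ hx =>
      rw [AddSubgroup.coe_neg]
      rcases hx with hx | hx <;> rw [hx]
      · simp
      · right; exact neg_eq_of_add_eq_zero_left h11
  have hW0 : ∀ v : ↥V, v ∈ W → (v : Fin (2 * g + 2) → ZMod 2) i₀ = 0 → v = 0 := by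
    intro v hv h0
    rcases hWd v hv with h | h
    · exact Subtype.ext h
    · rw [h] at h0; simp at h0
  symm
  let Φ : {f : Q → ZMod 2 // ∑ q, f q = 0} → {z : ↥V ⧸ W | σs z = z} := fun f =>
    ⟨QuotientAddGroup.mk ⟨L f.1, (hV _).2 ((hLsum f.1).trans f.2)⟩, hσs _ _ (hLσ f.1)⟩
  refine Nat.card_eq_of_bijective Φ ⟨?_, ?_⟩
  · intro f f' h
    have h' := QuotientAddGroup.eq.1 (congrArg Subtype.val h)
    have h'' := hW0 _ h' (by
      change -(L f.1 i₀) + L f'.1 i₀ = 0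
      simp [hL0])
    have h3 := neg_add_eq_zero.1 h''
    have h4 : L f.1 = L f'.1 := congrArg Subtype.val h3
    apply Subtype.ext
    funext q
    obtain ⟨a, rfl⟩ : ∃ a, p a = q := Quotient.exists_rep q
    rw [← hLne f.1 a, ← hLne f'.1 a, h4]
  · rintro ⟨z, hz⟩
    -- choose a representative vanishing at `i₀`
    obtain ⟨x, hx0, rfl⟩ : ∃ x : ↥V, (x : Fin (2 * g + 2) → ZMod 2) i₀ = 0 ∧
        QuotientAddGroup.mk x = z := by
      obtain ⟨x, rfl⟩ := QuotientAddGroup.mk_surjective z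
      by_cases h : (x : Fin (2 * g + 2) → ZMod 2) i₀ = 0
      · exact ⟨x, h, rfl⟩
      · refine ⟨x + ⟨1, hone⟩, ?_, ?_⟩
        · change (x : Fin (2 * g + 2) → ZMod 2) i₀ + 1 = 0
          generalize (x : Fin (2 * g + 2) → ZMod 2) i₀ = c at h
          revert c; decide
        · exact QuotientAddGroup.mk_add_of_mem x honeW
    have hxσV : (x : Fin (2 * g + 2) → ZMod 2) ∘ σ ∈ V := by
      rw [hV, ← (hV _).1 x.2]
      exact Equiv.sum_comp σ (x : Fin (2 * g + 2) → ZMod 2)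
    have hz' : σs (QuotientAddGroup.mk x) = QuotientAddGroup.mk x := hz
    rw [hσs x ⟨_, hxσV⟩ rfl] at hz'
    have h2 := hW0 _ (QuotientAddGroup.eq.1 hz') (by
      change -((x : Fin (2 * g + 2) → ZMod 2) (σ i₀)) + (x : Fin (2 * g + 2) → ZMod 2) i₀ = 0
      rw [hσ0, hx0]; simp)
    have hinv : ∀ i, (x : Fin (2 * g + 2) → ZMod 2) (σ i) = (x : Fin (2 * g + 2) → ZMod 2) i :=
      fun i => congrFun (congrArg Subtype.val (neg_add_eq_zero.1 h2)) i
    have hinvn : ∀ m : ℕ, ∀ i, (x : Fin (2 * g + 2) → ZMod 2) ((σ ^ m) i) =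
        (x : Fin (2 * g + 2) → ZMod 2) i := by
      intro m
      induction m with
      | zero => intro i; rfl
      | succ m ih => intro i; rw [pow_succ, Equiv.Perm.mul_apply, ih, hinv]
    let f : Q → ZMod 2 := Quotient.lift
      (fun s : {i : Fin (2 * g + 2) // i ≠ i₀} => (x : Fin (2 * g + 2) → ZMod 2) s.1) (by
        intro a b hab
        have hab' : σ.SameCycle a.1 b.1 := hab
        obtain ⟨m, -, -, hm⟩ := hab'.exists_pow_eq
        change (x : Fin (2 * g + 2) → ZMod 2) a.1 = (x : Fin (2 * g + 2) → ZMod 2) b.1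
        rw [← hm, hinvn])
    have hLf : L f = (x : Fin (2 * g + 2) → ZMod 2) := by
      funext i
      by_cases h : i = i₀
      · subst h; rw [hL0, hx0]
      · exact hLne f ⟨i, h⟩
    refine ⟨⟨f, ?_⟩, ?_⟩
    · rw [← hLsum, hLf]; exact (hV _).1 x.2
    · apply Subtype.ext
      change (QuotientAddGroup.mk _ : ↥V ⧸ W) = QuotientAddGroup.mk x
      congr 1
      exact Subtype.ext hLf
end

section
/- Let g ≥ 1, let n be an odd positive integer, and let σ be a permutation of Fin (2g+2) with exactly two fixed points such that every other orbit has exactly n elements (so n divides 2g; this models an automorphism of odd order n of a hyperelliptic surface fixing exactly two branch points). Then the subgroup of σ*-fixed elements {y ∈ J : σ* y = y} has cardinality 2^{2g/n}. (This is the statement that an odd-order automorphism of a hyperelliptic Riemann surface of genus g fixing exactly two branch points fixes exactly 2^{2g/n} two-spin structures.) -/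
open Equiv.Perm in
lemma aux_card {N g n : ℕ} (σ : Equiv.Perm (Fin N)) (hn' : 0 < n) (hs : σ.support.card = 2 * g)
    (horb : ∀ i ∈ σ.support,
      (σ ^ n) i = i ∧ ∀ m : ℕ, 0 < m → m < n → (σ ^ m) i ≠ i) :
    Fintype.card ↥σ.cycleFactorsFinset = 2 * g / n := by
  have key : ∀ c ∈ σ.cycleFactorsFinset, c.support.card = n := by
    intro c hc
    have hc' := (mem_cycleFactorsFinset_iff.mp hc)
    obtain ⟨a, ha⟩ := hc'.1.nonempty_support
    have hca : c = σ.cycleOf a := cycle_is_cycleOf ha hc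
    have has : a ∈ σ.support := mem_cycleFactorsFinset_support_le hc ha
    have hpow : ∀ k : ℕ, (c ^ k) a = (σ ^ k) a := by
      intro k
      rw [hca, cycleOf_pow_apply_self]
    rw [← hc'.1.orderOf]
    apply le_antisymm
    · apply orderOf_le_of_pow_eq_one hn'
      rw [hc'.1.pow_eq_one_iff]
      refine ⟨a, mem_support.mp ha, ?_⟩
      rw [hpow]; exact (horb a has).1
    · by_contra hlt
      push Not at hlt
      apply (horb a has).2 _ (orderOf_pos c) hlt
      rw [← hpow, pow_orderOf_eq_one]; rfl
  have h := sum_cycleType σ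
  rw [cycleType_def, hs] at h
  have h2 : ∑ c ∈ σ.cycleFactorsFinset, c.support.card = 2 * g := h
  rw [Finset.sum_congr rfl key, Finset.sum_const, smul_eq_mul] at h2
  rw [Fintype.card_coe, ← h2, Nat.mul_div_cancel _ hn']

set_option maxHeartbeats 1000000 in
/-- An odd-order automorphism of a hyperelliptic surface of genus `g` fixing exactly two
branch points (modelled as a permutation `σ` of the `2g+2` branch points with exactly two
fixed points, all other orbits having exactly `n` elements, `n` odd) fixes exactly
`2^{2g/n}` two-spin structures, i.e. elements of `J = V ⧸ W`. -/
theorem odd_auto_two_fixed_spin_count (g n : ℕ) (hg : 1 ≤ g) (hn : Odd n) (hn' : 0 < n)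
    (σ : Equiv.Perm (Fin (2 * g + 2))) (i₀ i₁ : Fin (2 * g + 2)) (hne : i₀ ≠ i₁)
    (hfix : ∀ i, σ i = i ↔ (i = i₀ ∨ i = i₁))
    (horb : ∀ i : Fin (2 * g + 2), i ≠ i₀ → i ≠ i₁ →
      (σ ^ n) i = i ∧ ∀ m : ℕ, 0 < m → m < n → (σ ^ m) i ≠ i)
    (V : AddSubgroup (Fin (2 * g + 2) → ZMod 2))
    (hV : ∀ x : Fin (2 * g + 2) → ZMod 2, x ∈ V ↔ ∑ i, x i = 0)
    (W : AddSubgroup ↥V)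
    (hW : W = AddSubgroup.closure {v : ↥V | (v : Fin (2 * g + 2) → ZMod 2) = 1})
    (σs : (↥V ⧸ W) →+ (↥V ⧸ W))
    (hσs : ∀ x y : ↥V, (y : Fin (2 * g + 2) → ZMod 2) = (x : Fin (2 * g + 2) → ZMod 2) ∘ σ →
      σs (QuotientAddGroup.mk x) = QuotientAddGroup.mk y) :
    Nat.card {z : ↥V ⧸ W | σs z = z} = 2 ^ (2 * g / n) := by
  classical
  have h2 : ∀ a : ZMod 2, a = 0 ∨ a = 1 := by decide
  have hsupp : ∀ i, i ∈ σ.support ↔ (i ≠ i₀ ∧ i ≠ i₁) := by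
    intro i
    rw [Equiv.Perm.mem_support, Ne, hfix, not_or]
  have hscard : σ.support.card = 2 * g := by
    have : σ.support = ({i₀, i₁} : Finset (Fin (2 * g + 2)))ᶜ := by
      ext i; simp [hsupp, -Equiv.Perm.mem_support]
    rw [this, Finset.card_compl, Finset.card_pair hne, Fintype.card_fin]; omega
  have hQ := aux_card σ hn' hscard (fun i hi => horb i ((hsupp i).1 hi).1 ((hsupp i).1 hi).2)
  have hi0 : σ i₀ = i₀ := (hfix i₀).2 (Or.inl rfl)
  have hi1 : σ i₁ = i₁ := (hfix i₁).2 (Or.inr rfl)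
  -- membership in W
  have hWmem : ∀ w : ↥V, w ∈ W → (w : Fin (2 * g + 2) → ZMod 2) i₀ = 0 → w = 0 := by
    intro w hw h0
    have : (w : Fin (2 * g + 2) → ZMod 2) = 0 ∨ (w : Fin (2 * g + 2) → ZMod 2) = 1 := by
      rw [hW] at hw
      clear h0
      induction hw using AddSubgroup.closure_induction with
      | mem x hx => exact Or.inr hx
      | zero => exact Or.inl rfl
      | add x y _ _ hx hy =>
        have h11 : (1 : Fin (2 * g + 2) → ZMod 2) + 1 = 0 := by
          funext i; exact (by decide : (1 : ZMod 2) + 1 = 0)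
        rcases hx with hx | hx <;> rcases hy with hy | hy <;> simp [hx, hy, h11]
      | neg x _ hx =>
        have h11 : -(1 : Fin (2 * g + 2) → ZMod 2) = 1 := by
          funext i; exact (by decide : -(1 : ZMod 2) = 1)
        rcases hx with hx | hx <;> simp [hx, h11]
    rcases this with h | h
    · exact Subtype.ext h
    · rw [h] at h0; simp at h0
  have hmkinj : ∀ a b : ↥V, (a : Fin (2 * g + 2) → ZMod 2) i₀ = (b : Fin (2 * g + 2) → ZMod 2) i₀ →
      (QuotientAddGroup.mk a : ↥V ⧸ W) = QuotientAddGroup.mk b → a = b := by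
    intro a b hab h
    rw [QuotientAddGroup.eq] at h
    have := hWmem _ h (by simp [hab, CharTwo.add_self_eq_zero])
    exact neg_add_eq_zero.mp this
  have h1V : (1 : Fin (2 * g + 2) → ZMod 2) ∈ V := by
    rw [hV]; simp
    have : (2 : ZMod 2) = 0 := by decide
    simp [this]
  have h1W : (⟨1, h1V⟩ : ↥V) ∈ W := by
    rw [hW]; exact AddSubgroup.subset_closure rfl
  have hσV : ∀ x : ↥V, (x : Fin (2 * g + 2) → ZMod 2) ∘ σ ∈ V := by
    intro x
    rw [hV]
    have := (hV x).1 x.2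
    rw [← this]
    exact Equiv.sum_comp σ _
  let Y : (↥σ.cycleFactorsFinset → ZMod 2) → Fin (2 * g + 2) → ZMod 2 := fun f i =>
    if h : i ∈ σ.support then f ⟨σ.cycleOf i, Equiv.Perm.cycleOf_mem_cycleFactorsFinset_iff.2 h⟩
    else 0
  have hYσ : ∀ f i, Y f (σ i) = Y f i := by
    intro f i
    have hc : σ.cycleOf (σ i) = σ.cycleOf i :=
      (Equiv.Perm.sameCycle_apply_left.2 (Equiv.Perm.SameCycle.refl σ i)).cycleOf_eq
    by_cases h : i ∈ σ.support
    · have h' : σ i ∈ σ.support := Equiv.Perm.apply_mem_support.2 h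
      simp only [Y, dif_pos h, dif_pos h']
      congr 1
      exact Subtype.ext hc
    · have h' : σ i ∉ σ.support := fun h' => h (Equiv.Perm.apply_mem_support.1 h')
      simp only [Y, dif_neg h, dif_neg h']
  let X : (↥σ.cycleFactorsFinset → ZMod 2) → Fin (2 * g + 2) → ZMod 2 := fun f =>
    Y f - Pi.single i₁ (∑ i, Y f i)
  have hXV : ∀ f, X f ∈ V := by
    intro f
    rw [hV]
    simp [X, Finset.sum_sub_distrib]
  have hX0 : ∀ f, X f i₀ = 0 := by
    intro f
    have : i₀ ∉ σ.support := by simp [hi0]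
    simp only [X, Y, Pi.sub_apply, Pi.single_eq_of_ne hne, dif_neg this, sub_zero]
  have hXs : ∀ f i, (h : i ∈ σ.support) →
      X f i = f ⟨σ.cycleOf i, Equiv.Perm.cycleOf_mem_cycleFactorsFinset_iff.2 h⟩ := by
    intro f i h
    simp only [X, Y, Pi.sub_apply, Pi.single_eq_of_ne ((hsupp i).1 h).2, dif_pos h, sub_zero]
  have hXσ : ∀ f, X f ∘ σ = X f := by
    intro f
    funext i
    simp only [X, Function.comp, Pi.sub_apply, hYσ]
    congr 1
    by_cases h : i = i₁
    · subst h; rw [hi1]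
    · have : σ i ≠ i₁ := fun h' => h (σ.injective (h'.trans hi1.symm))
      rw [Pi.single_eq_of_ne h, Pi.single_eq_of_ne this]
  let Φ : (↥σ.cycleFactorsFinset → ZMod 2) → {z : ↥V ⧸ W | σs z = z} := fun f =>
    ⟨QuotientAddGroup.mk ⟨X f, hXV f⟩, hσs _ _ (hXσ f).symm⟩
  have hrep : ∀ q : ↥σ.cycleFactorsFinset, ∃ a, a ∈ σ.support ∧ σ.cycleOf a = q := by
    intro q
    obtain ⟨a, ha⟩ := (Equiv.Perm.mem_cycleFactorsFinset_iff.mp q.2).1.nonempty_support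
    exact ⟨a, Equiv.Perm.mem_cycleFactorsFinset_support_le q.2 ha,
      (Equiv.Perm.cycle_is_cycleOf ha q.2).symm⟩
  have hΦ : Function.Bijective Φ := by
    constructor
    · intro f f' h
      have h1 := hmkinj _ _ (by simp [hX0]) (congrArg Subtype.val h)
      have h3 : X f = X f' := congrArg Subtype.val h1
      funext q
      obtain ⟨a, ha, haq⟩ := hrep q
      have := congrFun h3 a
      rw [hXs f a ha, hXs f' a ha] at this
      have e : (⟨σ.cycleOf a, Equiv.Perm.cycleOf_mem_cycleFactorsFinset_iff.2 ha⟩ :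
        ↥σ.cycleFactorsFinset) = q := Subtype.ext haq
      rwa [e] at this
    · rintro ⟨z, hz⟩
      have hx : ∃ x : ↥V, (x : Fin (2 * g + 2) → ZMod 2) i₀ = 0 ∧
          (QuotientAddGroup.mk x : ↥V ⧸ W) = z := by
        obtain ⟨x, rfl⟩ := QuotientAddGroup.mk_surjective z
        rcases h2 ((x : Fin (2 * g + 2) → ZMod 2) i₀) with h | h
        · exact ⟨x, h, rfl⟩
        · refine ⟨x - ⟨1, h1V⟩, by simp [h], ?_⟩
          rw [QuotientAddGroup.eq]
          simpa using h1W
      obtain ⟨x, hx0, rfl⟩ := hx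
      have hz' : σs (QuotientAddGroup.mk x) = QuotientAddGroup.mk x := hz
      rw [hσs x ⟨_, hσV x⟩ rfl] at hz'
      have hxσ : (x : Fin (2 * g + 2) → ZMod 2) ∘ σ = x :=
        congrArg Subtype.val (hmkinj _ _ (by simp [hi0]) hz')
      have hpow : ∀ (k : ℕ) i, (x : Fin (2 * g + 2) → ZMod 2) ((σ ^ k) i) = x.1 i := by
        intro k
        induction k with
        | zero => intro i; rfl
        | succ k ih =>
          intro i
          rw [pow_succ, Equiv.Perm.mul_apply, ih]
          exact congrFun hxσ i
      choose r hr hrq using hrep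
      refine ⟨fun q => x.1 (r q), ?_⟩
      suffices hs : X (fun q => x.1 (r q)) = x.1 from
        Subtype.ext (congrArg (QuotientAddGroup.mk (s := W)) (Subtype.ext hs))
      set f : ↥σ.cycleFactorsFinset → ZMod 2 := fun q => x.1 (r q) with hf
      have hsu : ∀ i, i ∈ σ.support → X f i = x.1 i := by
        intro i hi
        rw [hXs f i hi]
        have hq := hrq ⟨σ.cycleOf i, Equiv.Perm.cycleOf_mem_cycleFactorsFinset_iff.2 hi⟩
        have hsc := (Equiv.Perm.sameCycle_iff_cycleOf_eq_of_mem_support (hr _) hi).2 hq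
        obtain ⟨k, hk⟩ := hsc.exists_nat_pow_eq
        exact (hpow k _).symm.trans (congrArg x.1 hk)
      have hne1 : ∀ i, i ≠ i₁ → X f i = x.1 i := by
        intro i hi
        by_cases h0 : i = i₀
        · rw [h0, hX0, hx0]
        · exact hsu i ((hsupp i).2 ⟨h0, hi⟩)
      have hsum : ∑ i, (X f i - x.1 i) = 0 := by
        rw [Finset.sum_sub_distrib, (hV _).1 (hXV f), (hV _).1 x.2, sub_zero]
      rw [Finset.sum_eq_single i₁ (fun i _ hi => by rw [hne1 i hi, sub_self]) (by simp)] at hsum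
      funext i
      by_cases h : i = i₁
      · rw [h]; exact sub_eq_zero.mp hsum
      · exact hne1 i h
  rw [← Nat.card_congr (Equiv.ofBijective Φ hΦ), Nat.card_eq_fintype_card, Fintype.card_fun, hQ,
    ZMod.card]
end
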